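/- Let k ≥ 1 be an integer and ζ > 0 a positive irrational real number. Set C := 1/2 if ζ ∈ (0, 1/2), and otherwise C := (1/2)·L_k(ζ)^{−1} − ε for an arbitrary fixed ε > 0, where L_k(ζ) := max_{1≤j≤k} j·ζ^{j−1}. Then there exists ẑ > 0 (depending on k, ζ, ε) such that for every integer z ≥ ẑ satisfying max_{1≤j≤k} ‖ζ^j·z‖ < C·z^{−1} the following holds: writing y_j for the nearest integer to ζ^j·z, and writing y₁/z = y₀/z₀ in lowest terms (gcd(y₀, z₀) = 1, z₀ > 0), we have that z₀^k divides z, and moreover (z, y₁, …, y_k) = M·(z₀^k, z₀^{k−1}·y₀, z₀^{k−2}·y₀², …, y₀^k) for some positive integer M. -/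

import Mathlib

open Filter Set

/-- `distNearestInt x` is the distance from `x` to the nearest integer. -/
noncomputable def distNearestInt (x : ℝ) : ℝ := |x - (round x : ℤ)|

/-- `Lk k t = max_{1≤j≤k} j·t^{j-1}`. -/
noncomputable def Lk (k : ℕ) (t : ℝ) : ℝ :=
  ⨆ j : Fin k, (((j : ℕ) : ℝ) + 1) * t ^ (j : ℕ)

lemma alg_step (z z₀ : ℕ) (hz₀ : 0 < z₀) (hle : z₀ ≤ z) (y₀ : ℤ) (hg : Int.gcd y₀ (z₀ : ℤ) = 1)
    (k : ℕ) (y : ℕ → ℤ)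
    (h : ∀ j, 1 ≤ j → j ≤ k → |(y j : ℝ) - z * ((y₀ : ℝ) / z₀) ^ j| < (z : ℝ)⁻¹) :
    ∀ j, j ≤ k → ∃ m : ℤ, (z : ℤ) = m * (z₀ : ℤ) ^ j ∧ (1 ≤ j → y j = m * y₀ ^ j) := by
  intro j
  induction j with
  | zero => intro _; exact ⟨z, by simp, by simp⟩
  | succ j ih =>
    intro hj
    obtain ⟨m, hm, -⟩ := ih (by omega)
    have hb := h (j + 1) (by omega) hj
    have hz0R : (0 : ℝ) < z₀ := by exact_mod_cast hz₀
    have hzR : (0 : ℝ) < z := by exact_mod_cast (lt_of_lt_of_le hz₀ hle)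
    have hleR : (z₀ : ℝ) ≤ z := by exact_mod_cast hle
    have hmR : (z : ℝ) = m * (z₀ : ℝ) ^ j := by exact_mod_cast hm
    have e : ((y (j+1) * z₀ - m * y₀ ^ (j+1) : ℤ) : ℝ)
        = ((y (j+1) : ℝ) - z * ((y₀ : ℝ) / z₀) ^ (j+1)) * z₀ := by
      rw [hmR]; push_cast; rw [div_pow]; field_simp; ring
    have hlt : |((y (j+1) * z₀ - m * y₀ ^ (j+1) : ℤ) : ℝ)| < 1 := by
      rw [e, abs_mul, abs_of_pos hz0R]
      calc _ < (z : ℝ)⁻¹ * z₀ := by gcongr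
        _ ≤ (z : ℝ)⁻¹ * z := by gcongr
        _ = 1 := by field_simp
    have hzero : y (j+1) * z₀ - m * y₀ ^ (j+1) = 0 := by
      rw [← Int.abs_lt_one_iff]; exact_mod_cast hlt
    have hcop : IsCoprime (z₀ : ℤ) (y₀ ^ (j+1)) :=
      (Int.isCoprime_iff_gcd_eq_one.mpr hg).symm.pow_right
    have hd : (z₀ : ℤ) ∣ m := hcop.dvd_of_dvd_mul_right ⟨y (j+1), by linarith⟩
    obtain ⟨m', rfl⟩ := hd
    refine ⟨m', by rw [hm]; ring, fun _ => ?_⟩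
    have hne : (z₀ : ℤ) ≠ 0 := by exact_mod_cast hz₀.ne'
    apply mul_right_cancel₀ hne
    linarith

lemma final_alg (k : ℕ) (z : ℕ) (hz : 0 < z) (y : ℕ → ℤ)
    (h : ∀ j, 1 ≤ j → j ≤ k → |(y j : ℝ) - z * ((y 1 : ℝ) / z) ^ j| < (z : ℝ)⁻¹) :
    ∃ (z₀ M : ℕ) (y₀ : ℤ), 0 < z₀ ∧ 0 < M ∧ Int.gcd y₀ (z₀ : ℤ) = 1 ∧
        (y₀ : ℝ) / (z₀ : ℝ) = (y 1 : ℝ) / (z : ℝ) ∧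
        z₀ ^ k ∣ z ∧ z = M * z₀ ^ k ∧
        ∀ j : ℕ, 1 ≤ j → j ≤ k → y j = (M : ℤ) * (z₀ : ℤ) ^ (k - j) * y₀ ^ j := by
  have hq : (((y 1 : ℚ) / z : ℚ) : ℝ) = (y 1 : ℝ) / z := by push_cast; rfl
  set q : ℚ := (y 1 : ℚ) / z with hqdef
  have hqq : (q.num : ℝ) / q.den = (y 1 : ℝ) / z := by rw [← hq, Rat.cast_def]
  have hdvd : (q.den : ℤ) ∣ z := by
    have := Rat.den_dvd (y 1) z
    rw [Rat.divInt_eq_div] at this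
    simpa [hqdef] using this
  have hle : q.den ≤ z := Nat.le_of_dvd hz (by exact_mod_cast hdvd)
  have hg : Int.gcd q.num (q.den : ℤ) = 1 := by
    have := q.reduced
    simpa [Int.gcd, Nat.Coprime] using this
  have key := alg_step z q.den q.den_pos hle q.num hg k y (by rw [hqq]; exact h)
  obtain ⟨m, hm, -⟩ := key k le_rfl
  have hd0 : (0 : ℤ) < q.den := by exact_mod_cast q.den_pos
  have hmpos : 0 < m := by
    have h1 : 0 < m * (q.den : ℤ) ^ k := by rw [← hm]; exact_mod_cast hz
    exact pos_of_mul_pos_left h1 (by positivity)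
  lift m to ℕ using hmpos.le
  have hm' : z = m * q.den ^ k := by exact_mod_cast hm
  refine ⟨q.den, m, q.num, q.den_pos, by exact_mod_cast hmpos, hg, hqq,
    ⟨m, by rw [hm']; ring⟩, hm', ?_⟩
  intro j h1 hj
  obtain ⟨n, hn, hy⟩ := key j hj
  rw [hy h1]
  congr 1
  have hne : (q.den : ℤ) ^ j ≠ 0 := by positivity
  apply mul_right_cancel₀ hne
  rw [← hn, hm, mul_assoc, ← pow_add, Nat.sub_add_cancel hj]

lemma analytic (k : ℕ) (ζ C : ℝ) (hζ0 : 0 < ζ) (hC : C ≤ 1 / 2)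
    (hs : ∀ j : ℕ, 2 ≤ j → j ≤ k → C * (j * ζ ^ (j - 1)) < 1 / 2) :
    ∃ zhat : ℕ, 0 < zhat ∧ ∀ z : ℕ, zhat ≤ z →
      (∀ j : ℕ, 1 ≤ j → j ≤ k → distNearestInt (ζ ^ j * (z : ℝ)) < C * (z : ℝ)⁻¹) →
      ∀ j, 1 ≤ j → j ≤ k → |((round (ζ ^ j * (z : ℝ)) : ℤ) : ℝ)
        - z * (((round (ζ ^ 1 * (z : ℝ)) : ℤ) : ℝ) / z) ^ j| < (z : ℝ)⁻¹ := by
  have hev : ∀ᶠ n : ℕ in atTop, ∀ j ∈ Finset.Icc 2 k,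
      C * (j * (ζ + ((n : ℝ))⁻¹) ^ (j - 1)) < 1 / 2 := by
    rw [Filter.eventually_all_finset]
    intro j hj
    rw [Finset.mem_Icc] at hj
    have ht : Tendsto (fun n : ℕ => C * (j * (ζ + ((n : ℝ))⁻¹) ^ (j - 1))) atTop
        (nhds (C * (j * (ζ + 0) ^ (j - 1)))) :=
      (((tendsto_const_nhds.add tendsto_inv_atTop_nhds_zero_nat).pow _).const_mul _).const_mul _
    rw [add_zero] at ht
    exact ht.eventually_lt_const (hs j hj.1 hj.2)
  obtain ⟨N, hN⟩ := eventually_atTop.mp hev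
  refine ⟨N + 1, by omega, fun z hz H j h1 hj => ?_⟩
  have hzpos : 0 < z := by omega
  have hzR : (0 : ℝ) < z := by exact_mod_cast hzpos
  have hz1 : (1 : ℝ) ≤ z := by exact_mod_cast hzpos
  rcases Nat.eq_or_lt_of_le h1 with rfl | h2
  · have : ((round (ζ ^ 1 * (z : ℝ)) : ℤ) : ℝ)
        - z * (((round (ζ ^ 1 * (z : ℝ)) : ℤ) : ℝ) / z) ^ 1 = 0 := by
      rw [pow_one (_ / _)]; field_simp; ring
    rw [this, abs_zero]; positivity
  have hB := hN z (by omega) j (Finset.mem_Icc.mpr ⟨h2, hj⟩)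
  have H1 := H 1 le_rfl (by omega)
  have Hj := H j h1 hj
  unfold distNearestInt at H1 Hj
  set y1 : ℝ := ((round (ζ ^ 1 * (z : ℝ)) : ℤ) : ℝ)
  set yj : ℝ := ((round (ζ ^ j * (z : ℝ)) : ℤ) : ℝ)
  have hCpos : 0 < C := by
    have h0 : 0 < C * (z : ℝ)⁻¹ := lt_of_le_of_lt (abs_nonneg _) H1
    exact pos_of_mul_pos_left h0 (by positivity)
  set x : ℝ := y1 / z with hx
  have hd : z * |ζ - x| ≤ C * (z : ℝ)⁻¹ := by
    have e : ζ ^ 1 * z - y1 = z * (ζ - x) := by rw [hx]; field_simp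
    rw [e, abs_mul, abs_of_pos hzR] at H1
    exact H1.le
  have hinv1 : (z : ℝ)⁻¹ ≤ 1 := inv_le_one_of_one_le₀ hz1
  have hinv0 : 0 < (z : ℝ)⁻¹ := by positivity
  have hd2 : |ζ - x| ≤ (z : ℝ)⁻¹ := by
    have := abs_nonneg (ζ - x)
    nlinarith
  have hxB : |x| ≤ ζ + (z : ℝ)⁻¹ := by
    have := abs_sub_abs_le_abs_sub x ζ
    rw [abs_sub_comm, abs_of_pos hζ0] at this
    linarith
  have hmax : max |ζ| |x| ≤ ζ + (z : ℝ)⁻¹ := by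
    apply max_le _ hxB
    rw [abs_of_pos hζ0]; linarith
  have hp := abs_pow_sub_pow_le ζ x j
  have hp2 : |ζ ^ j - x ^ j| ≤ |ζ - x| * (j * (ζ + (z : ℝ)⁻¹) ^ (j - 1)) := by
    refine hp.trans ?_
    rw [mul_assoc]
    gcongr
  have hD : z * |ζ ^ j - x ^ j| ≤ 1 / 2 * (z : ℝ)⁻¹ := by
    calc z * |ζ ^ j - x ^ j| ≤ z * (|ζ - x| * (j * (ζ + (z : ℝ)⁻¹) ^ (j - 1))) := by gcongr
      _ = (z * |ζ - x|) * (j * (ζ + (z : ℝ)⁻¹) ^ (j - 1)) := by ring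
      _ ≤ (C * (z : ℝ)⁻¹) * (j * (ζ + (z : ℝ)⁻¹) ^ (j - 1)) := by gcongr
      _ = (C * (j * (ζ + (z : ℝ)⁻¹) ^ (j - 1))) * (z : ℝ)⁻¹ := by ring
      _ ≤ _ := by gcongr
  have e2 : yj - z * x ^ j = -(ζ ^ j * z - yj) + z * (ζ ^ j - x ^ j) := by ring
  rw [e2]
  have ht := abs_add_le (-(ζ ^ j * z - yj)) (z * (ζ ^ j - x ^ j))
  rw [abs_neg, abs_mul, abs_of_pos hzR] at ht
  have : C * (z : ℝ)⁻¹ ≤ 1 / 2 * (z : ℝ)⁻¹ := by gcongr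
  linarith

lemma le_Lk (k : ℕ) (t : ℝ) (j : ℕ) (h1 : 1 ≤ j) (hj : j ≤ k) :
    j * t ^ (j - 1) ≤ Lk k t := by
  have := le_ciSup (f := fun j : Fin k => (((j : ℕ) : ℝ) + 1) * t ^ (j : ℕ))
    (Set.finite_range _).bddAbove ⟨j - 1, by omega⟩
  simp only at this
  rw [← Nat.cast_add_one, Nat.sub_add_cancel h1] at this
  exact this

lemma half_bound (ζ : ℝ) (hζ0 : 0 < ζ) (h : ζ < 1 / 2) (n : ℕ) :
    ((n + 2 : ℕ) : ℝ) * ζ ^ (n + 1) < 1 := by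
  induction n with
  | zero => norm_num; linarith
  | succ n ih =>
    have hp : 0 < ζ ^ (n + 1) := by positivity
    have hn : (0 : ℝ) ≤ n := by positivity
    rw [pow_succ]
    push_cast at ih ⊢
    have h3 : ((n : ℝ) + 1 + 2) * ζ ≤ n + 2 := by nlinarith
    nlinarith

theorem structure_of_solutions (k : ℕ) (hk : 1 ≤ k) (ζ : ℝ) (hζ0 : 0 < ζ)
    (hirr : Irrational ζ) (ε : ℝ) (hε : 0 < ε) :
    ∃ zhat : ℕ, 0 < zhat ∧ ∀ z : ℕ, zhat ≤ z →
      (∀ j : ℕ, 1 ≤ j → j ≤ k →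
        distNearestInt (ζ ^ j * (z : ℝ)) <
          (if ζ < 1 / 2 then (1 / 2 : ℝ) else 1 / 2 * (Lk k ζ)⁻¹ - ε) * (z : ℝ)⁻¹) →
      ∃ (z₀ M : ℕ) (y₀ : ℤ), 0 < z₀ ∧ 0 < M ∧ Int.gcd y₀ (z₀ : ℤ) = 1 ∧
        (y₀ : ℝ) / (z₀ : ℝ) = ((round (ζ * (z : ℝ)) : ℤ) : ℝ) / (z : ℝ) ∧
        z₀ ^ k ∣ z ∧ z = M * z₀ ^ k ∧
        ∀ j : ℕ, 1 ≤ j → j ≤ k →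
          round (ζ ^ j * (z : ℝ)) = (M : ℤ) * (z₀ : ℤ) ^ (k - j) * y₀ ^ j := by
  set C : ℝ := if ζ < 1 / 2 then (1 / 2 : ℝ) else 1 / 2 * (Lk k ζ)⁻¹ - ε with hCdef
  have hL1 : 1 ≤ Lk k ζ := by simpa using le_Lk k ζ 1 le_rfl hk
  have hLi : (Lk k ζ)⁻¹ ≤ 1 := inv_le_one_of_one_le₀ hL1
  have hLm : (Lk k ζ)⁻¹ * Lk k ζ = 1 := inv_mul_cancel₀ (by linarith)
  have hC : C ≤ 1 / 2 := by
    rw [hCdef]; split_ifs <;> linarith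
  have hs : ∀ j : ℕ, 2 ≤ j → j ≤ k → C * (j * ζ ^ (j - 1)) < 1 / 2 := by
    intro j h2 hj
    rw [hCdef]
    split_ifs with h
    · obtain ⟨n, rfl⟩ := Nat.exists_eq_add_of_le' h2
      have := half_bound ζ hζ0 h n
      simp only [Nat.add_sub_cancel, show n + 2 - 1 = n + 1 from rfl]
      linarith
    · have hb := le_Lk k ζ j (by omega) hj
      have hpos : 0 < (j : ℝ) * ζ ^ (j - 1) := by
        have : (0 : ℝ) < j := by exact_mod_cast (by omega : 0 < j)
        positivity
      have hLi0 : 0 < (Lk k ζ)⁻¹ := by positivity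
      have h5 : (Lk k ζ)⁻¹ * (j * ζ ^ (j - 1)) ≤ (Lk k ζ)⁻¹ * Lk k ζ := by gcongr
      have h6 : 0 < ε * (j * ζ ^ (j - 1)) := by positivity
      linarith
  obtain ⟨zhat, h0, H⟩ := analytic k ζ C hζ0 hC hs
  refine ⟨zhat, h0, fun z hz hyp => ?_⟩
  have := final_alg k z (by omega) (fun j => round (ζ ^ j * (z : ℝ))) (H z hz hyp)
  simpa only [pow_one] using this
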